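/- Let (X,W,d) be a strictly convex complete convex metric space and let Y be a nonempty compact convex subset of X. Then every continuous map f : Y → Y has a fixed point in Y. -/

import Mathlib

/-!
Cover the compact set by small balls with centres `x k`, record the distances of a point to these
centres in a cube, and map the cube back by iterated use of `W`, with weights that count only the
centres close to the point. Since `W x y t` lies in every closed ball containing `x` and `y`, this
moves each point of the compact set by little, so Brouwer's theorem on the cube yields
approximate fixed points of `f`, which accumulate at a fixed point.

Brouwer's theorem follows from the Knaster–Kuratowski–Mazurkiewicz lemma, and the latter from
Scarf's combinatorial lemma: colour the points of a fine finite net of the simplex by coordinates,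
rank them by each coordinate, and find by a parity count a set of net points whose minima, in some
coordinates that all occur among its colours, are not all exceeded by any point of the net. Such a
set is small, because these minima nearly sum to `1`.
-/

/-! ### Scarf's lemma -/

section Scarf

open Finset Function

section Dominating

variable {V ι α : Type*} [LinearOrder α]

/-- Scarf's dominating sets, for a family of rankings `r i` of `V`: no `v` ranks above the worst
element of `B` in every ranking at once. -/
def IsDominating (r : ι → V → α) (B : Finset V) : Prop :=
  ∀ v, ∃ i, ∀ b ∈ B, r i v ≤ r i b

/-- The function `m` selects from `B` a worst element for each ranking `r i`. -/
def IsArgmin (r : ι → V → α) (B : Finset V) (m : ι → V) : Prop :=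
  ∀ i, m i ∈ B ∧ ∀ b ∈ B, r i (m i) ≤ r i b

/-- Among the elements that rank above the worst element of `B` in every ranking other than `p`,
the element `x` is best for `p`. Such elements are those whose addition to a dominating set can
keep it dominating. -/
structure IsEntrant (r : ι → V → α) (B : Finset V) (p : ι) (x : V) : Prop where
  exists_lt : ∀ k ≠ p, ∃ b ∈ B, r k b < r k x
  le_of_exists_lt : ∀ v, (∀ k ≠ p, ∃ b ∈ B, r k b < r k v) → r p v ≤ r p x

variable {r : ι → V → α} {B D R : Finset V} {m m' : ι → V} {p q : ι} {x z : V}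

theorem IsDominating.mono (hB : IsDominating r B) (hDB : D ⊆ B) : IsDominating r D :=
  fun v => (hB v).imp fun _ hi b hb => hi b (hDB hb)

theorem exists_isArgmin (r : ι → V → α) (hB : B.Nonempty) : ∃ m, IsArgmin r B m := by
  choose m hm using fun i => B.exists_min_image (r i) hB
  exact ⟨m, hm⟩

theorem IsArgmin.exists_eq (hm : IsArgmin r B m) (hr : ∀ i, Injective (r i))
    (hB : IsDominating r B) (hx : x ∈ B) : ∃ i, m i = x := by
  obtain ⟨i, hi⟩ := hB x
  exact ⟨i, hr i (((hm i).2 x hx).antisymm (hi _ (hm i).1))⟩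

theorem IsArgmin.image_eq [Fintype ι] [DecidableEq V] (hm : IsArgmin r B m)
    (hr : ∀ i, Injective (r i)) (hB : IsDominating r B) : univ.image m = B := by
  ext x
  simp only [mem_image, mem_univ, true_and]
  exact ⟨fun ⟨i, hi⟩ => hi ▸ (hm i).1, hm.exists_eq hr hB⟩

theorem IsArgmin.injective [Fintype ι] (hm : IsArgmin r B m) (hr : ∀ i, Injective (r i))
    (hB : IsDominating r B) (hcard : #B = Fintype.card ι) : Injective m := by
  classical
  rw [← Set.injOn_univ, ← coe_univ, ← card_image_iff, hm.image_eq hr hB, hcard,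
    card_univ]

theorem IsArgmin.exists_ne_map_eq [Fintype ι] (hm : IsArgmin r B m)
    (hcard : #B + 1 = Fintype.card ι) : ∃ p q, p ≠ q ∧ m p = m q := by
  obtain ⟨p, -, q, -, hpq, hmpq⟩ := exists_ne_map_eq_of_card_lt_of_maps_to
    (s := univ) (t := B) (by rw [card_univ]; lia) fun i _ => (hm i).1
  exact ⟨p, q, hpq, hmpq⟩

theorem exists_isEntrant [Finite V] (hp : ∃ v, ∀ k ≠ p, ∃ b ∈ B, r k b < r k v) :
    ∃ x, IsEntrant r B p x := by
  obtain ⟨x, hx, hmax⟩ := Set.exists_max_image {v | ∀ k ≠ p, ∃ b ∈ B, r k b < r k v} (r p)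
    (Set.toFinite _) hp
  exact ⟨x, hx, hmax⟩

theorem IsEntrant.isDominating_insert [DecidableEq V] (hx : IsEntrant r B p x)
    (hB : IsDominating r B) : IsDominating r (insert x B) := by
  intro v
  simp only [forall_mem_insert]
  by_cases hv : ∀ k ≠ p, ∃ b ∈ B, r k b < r k v
  · obtain ⟨k, hk⟩ := hB v
    obtain rfl : k = p := by
      by_contra hkp
      obtain ⟨b, hb, hlt⟩ := hv k hkp
      exact (hk b hb).not_gt hlt
    exact ⟨k, hx.le_of_exists_lt v hv, hk⟩
  · push Not at hv
    obtain ⟨k, hkp, hk⟩ := hv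
    obtain ⟨b, hb, hlt⟩ := hx.exists_lt k hkp
    exact ⟨k, (hk b hb).trans hlt.le, hk⟩

theorem IsEntrant.notMem (hx : IsEntrant r B p x) (hr : ∀ i, Injective (r i))
    (hB : IsDominating r B) (hm : IsArgmin r B m) (hqp : q ≠ p) (hmpq : m p = m q) : x ∉ B := by
  have not_worst : ∀ k ≠ p, m k ≠ x := by
    rintro k hkp rfl
    obtain ⟨b, hb, hlt⟩ := hx.exists_lt k hkp
    exact ((hm k).2 b hb).not_gt hlt
  intro hxB
  obtain ⟨k, hk⟩ := hm.exists_eq hr hB hxB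
  obtain rfl : k = p := by_contra fun hkp => not_worst k hkp hk
  exact not_worst q hqp (hmpq ▸ hk)

theorem IsEntrant.index_unique (hp : IsEntrant r B p x) (hq : IsEntrant r B q x)
    (hB : IsDominating r B) : p = q := by
  obtain ⟨k, hk⟩ := hB x
  have index_eq {i : ι} (hi : IsEntrant r B i x) : k = i := by
    by_contra hki
    obtain ⟨b, hb, hlt⟩ := hi.exists_lt k hki
    exact (hk b hb).not_gt hlt
  exact (index_eq hp).symm.trans (index_eq hq)

theorem IsEntrant.unique (hr : ∀ i, Injective (r i)) (hx : IsEntrant r B p x)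
    (hz : IsEntrant r B p z) : x = z :=
  hr p ((hz.le_of_exists_lt x hx.exists_lt).antisymm (hx.le_of_exists_lt z hz.exists_lt))

/-- In a dominating set of full size each element is worst for exactly one ranking, so the new
element `z` is worst for a single `p`, and the others keep their worst element. -/
theorem IsArgmin.isEntrant_of_insert [Fintype ι] [DecidableEq V] (hm : IsArgmin r B m)
    (hr : ∀ i, Injective (r i)) (hcard : #B + 1 = Fintype.card ι) (hz : z ∉ B)
    (hzB : IsDominating r (insert z B)) (hpq : p ≠ q) (hmpq : m p = m q) :
    IsEntrant r B p z ∨ IsEntrant r B q z := by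
  obtain ⟨m', hm'⟩ := exists_isArgmin r (insert_nonempty z B)
  have hinj : Injective m' := hm'.injective hr hzB (by rw [card_insert_of_notMem hz, hcard])
  obtain ⟨i, rfl⟩ := hm'.exists_eq hr hzB (mem_insert_self z B)
  have mem_of_ne : ∀ k ≠ i, m' k ∈ B := fun k hk =>
    mem_of_mem_insert_of_ne (hm' k).1 (hinj.ne hk)
  have eq_of_ne : ∀ k ≠ i, m' k = m k := fun k hk =>
    hr k (((hm' k).2 _ (mem_insert_of_mem (hm k).1)).antisymm ((hm k).2 _ (mem_of_ne k hk)))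
  have entrant : IsEntrant r B i (m' i) := by
    refine ⟨fun k hk => ⟨m' k, mem_of_ne k hk, ?_⟩, fun v hv => ?_⟩
    · exact ((hm' k).2 _ (hm' i).1).lt_of_ne ((hr k).ne (hinj.ne hk))
    · obtain ⟨k, hk⟩ := hzB v
      obtain rfl : k = i := by
        by_contra hki
        obtain ⟨b, hb, hlt⟩ := hv k hki
        exact (hk b (mem_insert_of_mem hb)).not_gt hlt
      exact hk _ (hm' k).1
  by_cases hpi : p = i
  · exact .inl (hpi ▸ entrant)
  by_cases hqi : q = i
  · exact .inr (hqi ▸ entrant)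
  exact absurd (hinj ((eq_of_ne p hpi).trans (hmpq.trans (eq_of_ne q hqi).symm))) hpq

theorem exists_pair_forall_isDominating_insert_iff [Finite V] [Fintype ι] [DecidableEq V]
    (hr : ∀ i, Injective (r i)) (hB : IsDominating r B) (hne : B.Nonempty)
    (hcard : #B + 1 = Fintype.card ι) (hcand : ∀ p, ∃ v, ∀ k ≠ p, ∃ b ∈ B, r k b < r k v) :
    ∃ x y, x ≠ y ∧ ∀ z, z ∉ B ∧ IsDominating r (insert z B) ↔ z = x ∨ z = y := by
  obtain ⟨m, hm⟩ := exists_isArgmin r hne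
  obtain ⟨p, q, hpq, hmpq⟩ := hm.exists_ne_map_eq hcard
  obtain ⟨x, hx⟩ := exists_isEntrant (hcand p)
  obtain ⟨y, hy⟩ := exists_isEntrant (hcand q)
  refine ⟨x, y, ?_, fun z => ⟨fun ⟨hz, hzB⟩ => ?_, ?_⟩⟩
  · rintro rfl
    exact hpq (hx.index_unique hy hB)
  · exact (hm.isEntrant_of_insert hr hcard hz hzB hpq hmpq).imp (·.unique hr hx) (·.unique hr hy)
  · rintro (rfl | rfl)
    · exact ⟨hx.notMem hr hB hm hpq.symm hmpq, hx.isDominating_insert hB⟩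
    · exact ⟨hy.notMem hr hB hm hpq hmpq.symm, hy.isDominating_insert hB⟩

open scoped Classical in
theorem even_card_isDominating_covBy [Fintype V] [Fintype ι] (hr : ∀ i, Injective (r i))
    (hD : D.Nonempty) (hcand : ∀ p, ∃ v, ∀ k ≠ p, ∃ b ∈ D, r k b < r k v) :
    Even #{R | (IsDominating r R ∧ #R = Fintype.card ι) ∧ D ⋖ R} := by
  by_cases hex : ∃ R, (IsDominating r R ∧ #R = Fintype.card ι) ∧ D ⋖ R
  · obtain ⟨R, ⟨hR, hRcard⟩, hDR⟩ := hex
    have hcard : #D + 1 = Fintype.card ι := hRcard ▸ Order.covBy_iff_add_one_eq.1 hDR.card_finset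
    obtain ⟨x, y, hxy, hpair⟩ :=
      exists_pair_forall_isDominating_insert_iff hr (hR.mono hDR.le) hD hcard hcand
    have hx := (hpair x).2 (.inl rfl)
    have hy := (hpair y).2 (.inr rfl)
    have room_insert {z : V} (hz : z ∉ D ∧ IsDominating r (insert z D)) :
        (IsDominating r (insert z D) ∧ #(insert z D) = Fintype.card ι) ∧ D ⋖ insert z D :=
      ⟨⟨hz.2, by rw [card_insert_of_notMem hz.1, hcard]⟩, covBy_insert hz.1⟩
    suffices univ.filter (fun R => (IsDominating r R ∧ #R = Fintype.card ι) ∧ D ⋖ R) =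
        {insert x D, insert y D} by
      rw [this, card_pair ((insert_inj hx.1).not.2 hxy)]
      exact even_two
    ext R
    simp only [mem_filter_univ, mem_insert, mem_singleton]
    constructor
    · rintro ⟨⟨hdom, -⟩, hDR⟩
      obtain ⟨z, hz, rfl⟩ := covBy_iff_exists_insert.1 hDR
      obtain rfl | rfl := (hpair z).1 ⟨hz, hdom⟩
      exacts [.inl rfl, .inr rfl]
    · rintro (rfl | rfl)
      exacts [room_insert hx, room_insert hy]
  · simp only [filter_false_of_mem fun R _ hR => hex ⟨R, hR⟩, card_empty, Even.zero]

theorem image_erase_of_map_eq [DecidableEq V] [DecidableEq ι] {f : V → ι} {x y : V} (hy : y ∈ R)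
    (hyx : y ≠ x) (hf : f y = f x) : (R.erase x).image f = R.image f := by
  refine (image_subset_image (erase_subset _ _)).antisymm (image_subset_iff.2 fun z hz => ?_)
  obtain rfl | hzx := eq_or_ne z x
  · exact hf ▸ mem_image_of_mem f (mem_erase.2 ⟨hyx, hy⟩)
  · exact mem_image_of_mem f (mem_erase.2 ⟨hzx, hz⟩)

open scoped Classical in
/-- If `R` misses a colour, then two of its elements share a colour, and these are the only ones
that can be removed. -/
theorem even_card_image_eq_erase_covBy [Fintype V] [Fintype ι] [DecidableEq ι]
    {f : V → ι} (hcard : #R = Fintype.card ι) (hR : R.image f ≠ univ) (i₀ : ι) :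
    Even #{D | D.image f = univ.erase i₀ ∧ D ⋖ R} := by
  by_cases hex : ∃ D, D.image f = univ.erase i₀ ∧ D ⋖ R
  · obtain ⟨D, hx, hDR⟩ := hex
    obtain ⟨x, hxR, rfl⟩ := covBy_iff_exists_erase.1 hDR
    have hxi : f x ∈ univ.erase i₀ := by
      refine mem_erase.2 ⟨fun hxi => hR ?_, mem_univ _⟩
      rw [← insert_erase hxR, image_insert, hx, hxi, insert_erase (mem_univ _)]
    obtain ⟨y, hy, hfy⟩ := mem_image.1 (hx ▸ hxi)
    obtain ⟨hyx, hyR⟩ := mem_erase.1 hy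
    suffices ({D | D.image f = univ.erase i₀ ∧ D ⋖ R} : Finset (Finset V)) =
        {R.erase x, R.erase y} by
      rw [this, card_pair ((erase_inj R hxR).not.2 hyx.symm)]
      exact even_two
    ext D
    simp only [mem_filter_univ, mem_insert, mem_singleton]
    constructor
    · rintro ⟨hz, hDR⟩
      obtain ⟨z, hzR, rfl⟩ := covBy_iff_exists_erase.1 hDR
      have hinj : Set.InjOn f (R.erase z) := by
        rw [← card_image_iff, hz, card_erase_of_mem (mem_univ _), card_erase_of_mem hzR, hcard,
          card_univ]
      by_contra! hne
      exact hyx (hinj (mem_erase.2 ⟨fun h => hne.2 (h ▸ rfl), hyR⟩)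
        (mem_erase.2 ⟨fun h => hne.1 (h ▸ rfl), hxR⟩) hfy)
    · rintro (rfl | rfl)
      · exact ⟨hx, hDR⟩
      · refine ⟨?_, erase_covBy hyR⟩
        rw [image_erase_of_map_eq hxR hyx.symm hfy.symm, ← image_erase_of_map_eq hyR hyx hfy, hx]
  · simp only [filter_false_of_mem fun D _ hD => hex ⟨D, hD⟩, card_empty, Even.zero]

end Dominating

section Slack

variable {T ι α : Type*} [LinearOrder α] {r : ι → T ⊕ ι → α} {c : T → ι} {i₀ : ι}
  {D : Finset (T ⊕ ι)}

/-- The slack elements `inr j` with `j ≠ i₀`: the one set with all colours but `i₀` that lies in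
just one dominating set of full size. -/
def outerDoor (T : Type*) [Fintype ι] [DecidableEq ι] (i₀ : ι) : Finset (T ⊕ ι) :=
  (∅ : Finset T).disjSum (univ.erase i₀)

@[simp]
theorem inr_mem_outerDoor [Fintype ι] [DecidableEq ι] {j : ι} :
    Sum.inr j ∈ outerDoor T i₀ ↔ j ≠ i₀ := by
  simp [outerDoor]

@[simp]
theorem inl_notMem_outerDoor [Fintype ι] [DecidableEq ι] {t : T} :
    Sum.inl t ∉ outerDoor T i₀ := by
  simp [outerDoor]

theorem image_outerDoor [Fintype ι] [DecidableEq ι] (c : T → ι) (i₀ : ι) :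
    (outerDoor T i₀).image (Sum.elim c id) = univ.erase i₀ := by
  ext i
  simp [mem_image]

theorem eq_outerDoor_of_image_eq [Fintype ι] [DecidableEq ι]
    (hD : D.image (Sum.elim c id) = univ.erase i₀) (hT : ∀ t, Sum.inl t ∉ D) :
    D = outerDoor T i₀ := by
  ext (t | j)
  · simp [hT t]
  · simpa [hT] using Finset.ext_iff.1 hD j

theorem exists_forall_isDominating_insert_outerDoor_iff [Finite T] [Nonempty T] [Fintype ι]
    [DecidableEq ι] [DecidableEq T] (hr : ∀ i, Injective (r i))
    (hbot : ∀ k t, r k (Sum.inr k) < r k (Sum.inl t))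
    (htop : ∀ k j t, j ≠ k → r k (Sum.inl t) < r k (Sum.inr j)) (i₀ : ι) :
    ∃ x, ∀ z, z ∉ outerDoor T i₀ ∧ IsDominating r (insert z (outerDoor T i₀)) ↔ z = x := by
  obtain ⟨t, ht⟩ := Finite.exists_max fun t => r i₀ (Sum.inl t)
  refine ⟨Sum.inl t, fun z => ⟨fun ⟨hz, hdom⟩ => ?_, ?_⟩⟩
  · have inl_le (s : T) : r i₀ (Sum.inl s) ≤ r i₀ z := by
      obtain ⟨k, hk⟩ := hdom (Sum.inl s)
      obtain rfl : k = i₀ := by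
        by_contra hki
        exact (hk _ (mem_insert_of_mem (inr_mem_outerDoor.2 hki))).not_gt (hbot k s)
      exact hk _ (mem_insert_self _ _)
    obtain s | j := z
    · exact hr i₀ ((ht s).antisymm (inl_le t))
    · obtain rfl : j = i₀ := by simpa using hz
      exact absurd (hbot j t) (inl_le t).not_gt
  · rintro rfl
    refine ⟨inl_notMem_outerDoor, ?_⟩
    rintro (s | j)
    · refine ⟨i₀, (forall_mem_insert _ _ _).2 ⟨ht s, ?_⟩⟩
      rintro (s' | j) hj
      · exact absurd hj inl_notMem_outerDoor
      · exact (htop i₀ j s (inr_mem_outerDoor.1 hj)).le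
    · refine ⟨j, fun b _ => ?_⟩
      obtain s | k := b
      · exact (hbot j s).le
      · obtain rfl | hkj := eq_or_ne k j
        · rfl
        · exact ((hbot j t).trans (htop j k t hkj)).le

open scoped Classical in
theorem odd_card_isDominating_covBy_iff [Fintype T] [Nonempty T] [Fintype ι] [DecidableEq ι]
    (hr : ∀ i, Injective (r i)) (hbot : ∀ k t, r k (Sum.inr k) < r k (Sum.inl t))
    (htop : ∀ k j t, j ≠ k → r k (Sum.inl t) < r k (Sum.inr j))
    (hD : D.image (Sum.elim c id) = univ.erase i₀) :
    Odd #{R | (IsDominating r R ∧ #R = Fintype.card ι) ∧ D ⋖ R} ↔ D = outerDoor T i₀ := by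
  constructor
  · refine fun hodd => eq_outerDoor_of_image_eq hD fun t ht => Nat.not_even_iff_odd.2 hodd ?_
    exact even_card_isDominating_covBy hr ⟨_, ht⟩
      fun p => ⟨Sum.inr p, fun k hk => ⟨_, ht, htop k p t hk.symm⟩⟩
  · rintro rfl
    obtain ⟨x, hx⟩ := exists_forall_isDominating_insert_outerDoor_iff hr hbot htop i₀
    have hcard {z : T ⊕ ι} (hz : z ∉ outerDoor T i₀) :
        #(insert z (outerDoor T i₀)) = Fintype.card ι := by
      rw [card_insert_of_notMem hz, outerDoor, card_disjSum, card_empty, zero_add,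
        card_erase_add_one (mem_univ _), card_univ]
    suffices univ.filter (fun R => (IsDominating r R ∧ #R = Fintype.card ι) ∧
        outerDoor T i₀ ⋖ R) = {insert x (outerDoor T i₀)} by
      rw [this, card_singleton]
      exact odd_one
    ext R
    simp only [mem_filter_univ, mem_singleton, covBy_iff_exists_insert]
    constructor
    · rintro ⟨⟨hdom, -⟩, z, hz, rfl⟩
      rw [(hx z).1 ⟨hz, hdom⟩]
    · rintro rfl
      obtain ⟨hxO, hdom⟩ := (hx x).2 rfl
      exact ⟨⟨hdom, hcard hxO⟩, x, hxO, rfl⟩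

/-- **Scarf's lemma**, by counting the pairs `D ⋖ R` in which `R` is dominating of full size and `D`
has all colours but one. -/
theorem exists_isDominating_image_eq_univ [Finite T] [Nonempty T] [Fintype ι] [DecidableEq ι]
    (hr : ∀ i, Injective (r i)) (hbot : ∀ k t, r k (Sum.inr k) < r k (Sum.inl t))
    (htop : ∀ k j t, j ≠ k → r k (Sum.inl t) < r k (Sum.inr j)) (c : T → ι) :
    ∃ R, IsDominating r R ∧ R.image (Sum.elim c id) = univ := by
  classical
  have := Fintype.ofFinite T
  obtain ⟨i₀⟩ : Nonempty ι := ‹Nonempty T›.map c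
  let rooms : Finset (Finset (T ⊕ ι)) := {R | IsDominating r R ∧ #R = Fintype.card ι}
  let doors : Finset (Finset (T ⊕ ι)) := {D | D.image (Sum.elim c id) = univ.erase i₀}
  have odd_above : Odd (∑ D ∈ doors, #(rooms.bipartiteAbove (· ⋖ ·) D)) := by
    suffices {D ∈ doors | Odd #(rooms.bipartiteAbove (· ⋖ ·) D)} = {outerDoor T i₀} by
      rw [odd_sum_iff_odd_card_odd, this, card_singleton]
      exact odd_one
    ext D
    simp only [doors, rooms, bipartiteAbove, filter_filter, mem_filter_univ, mem_singleton]
    exact ⟨fun ⟨hD, hodd⟩ => (odd_card_isDominating_covBy_iff hr hbot htop hD).1 hodd, by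
      rintro rfl
      exact ⟨image_outerDoor c i₀,
        (odd_card_isDominating_covBy_iff hr hbot htop (image_outerDoor c i₀)).2 rfl⟩⟩
  rw [sum_card_bipartiteAbove_eq_sum_card_bipartiteBelow] at odd_above
  obtain ⟨R, hR, odd_below⟩ : ∃ R ∈ rooms, Odd #(doors.bipartiteBelow (· ⋖ ·) R) := by
    by_contra! hall
    exact Nat.not_even_iff_odd.2 odd_above
      (even_sum _ fun R hR => Nat.not_odd_iff_even.1 (hall R hR))
  obtain ⟨hdom, hcard⟩ := (mem_filter_univ R).1 hR
  refine ⟨R, hdom, by_contra fun hne => Nat.not_even_iff_odd.2 odd_below ?_⟩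
  simpa only [doors, bipartiteBelow, filter_filter] using
    even_card_image_eq_erase_covBy (f := Sum.elim c id) hcard hne i₀

end Slack

section TieBreaking

variable {T ι β : Type*} [LinearOrder T] [LinearOrder ι] [LinearOrder β]

/-- The ranking of `T ⊕ ι` by `u`, with ties broken by the order of `T`, in which the slack element
`inr k` comes last and all other slack elements come first. -/
def slackRank (u : T → β) (k : ι) : T ⊕ ι → WithBot ((β ×ₗ T) ⊕ₗ ι)
  | .inl t => ((toLex (.inl (toLex (u t, t))) : (β ×ₗ T) ⊕ₗ ι) : WithBot _)
  | .inr j => if j = k then ⊥ else ((toLex (.inr j) : (β ×ₗ T) ⊕ₗ ι) : WithBot _)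

theorem slackRank_inr_self_lt (u : T → β) (k : ι) (t : T) :
    slackRank u k (.inr k) < slackRank u k (.inl t) := by
  simp only [slackRank, if_pos]
  exact WithBot.bot_lt_coe _

theorem slackRank_inl_lt_inr (u : T → β) {k j : ι} (hj : j ≠ k) (t : T) :
    slackRank u k (.inl t) < slackRank u k (.inr j) := by
  simp only [slackRank, if_neg hj]
  exact WithBot.coe_lt_coe.2 (Sum.Lex.inl_lt_inr _ _)

theorem slackRank_inl_ne_inr (u : T → β) (k j : ι) (t : T) :
    slackRank u k (.inl t) ≠ slackRank u k (.inr j) := by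
  obtain rfl | hj := eq_or_ne j k
  · exact (slackRank_inr_self_lt u j t).ne'
  · exact (slackRank_inl_lt_inr u hj t).ne

theorem slackRank_injective (u : T → β) (k : ι) : Injective (slackRank u k) := by
  rintro (s | i) (t | j) h
  · simp only [slackRank, WithBot.coe_inj, toLex_inj, Sum.inl.injEq, Prod.mk.injEq] at h
    exact congrArg Sum.inl h.2
  · exact absurd h (slackRank_inl_ne_inr u k j s)
  · exact absurd h.symm (slackRank_inl_ne_inr u k i t)
  · simp only [slackRank] at h
    split_ifs at h <;> simp_all

theorem le_of_slackRank_inl_le {u : T → β} {k : ι} {s t : T}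
    (h : slackRank u k (.inl s) ≤ slackRank u k (.inl t)) : u s ≤ u t := by
  have := Sum.Lex.inl_le_inl_iff.1 (WithBot.coe_le_coe.1 h)
  exact (Prod.Lex.toLex_le_toLex'.1 this).1

end TieBreaking

theorem exists_colored_dominating {T ι β : Type*} [Finite T] [Nonempty T] [Finite ι]
    [LinearOrder β] (u : ι → T → β) (c : T → ι) :
    ∃ (S : Finset T) (C : Finset ι), (∀ i ∈ C, ∃ s ∈ S, c s = i) ∧
      ∀ t, ∃ i ∈ C, ∀ s ∈ S, u i t ≤ u i s := by
  classical
  have := Fintype.ofFinite T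
  have := Fintype.ofFinite ι
  let _ : LinearOrder T := linearOrderOfSTO WellOrderingRel
  let _ : LinearOrder ι := linearOrderOfSTO WellOrderingRel
  obtain ⟨R, hR, hcol⟩ := exists_isDominating_image_eq_univ
    (fun k => slackRank_injective (u k) k) (fun k => slackRank_inr_self_lt (u k) k)
    (fun k _ t hj => slackRank_inl_lt_inr (u k) hj t) c
  refine ⟨R.toLeft, univ \ R.toRight, fun i hi => ?_, fun t => ?_⟩
  · obtain ⟨s | j, hb, hbi⟩ := mem_image.1 (hcol ▸ mem_univ i)
    · exact ⟨s, mem_toLeft.2 hb, hbi⟩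
    · obtain rfl : j = i := hbi
      exact absurd (mem_toRight.2 hb) (mem_sdiff.1 hi).2
  · obtain ⟨i, hi⟩ := hR (.inl t)
    refine ⟨i, mem_sdiff.2 ⟨mem_univ i, fun hiR => ?_⟩, fun s hs => ?_⟩
    · exact (hi _ (mem_toRight.1 hiR)).not_gt (slackRank_inr_self_lt (u i) i t)
    · exact le_of_slackRank_inl_le (hi _ (mem_toLeft.1 hs))

end Scarf

/-! ### Brouwer's fixed point theorem -/

section StdSimplex

open Filter Topology

variable {ι : Type*} [Fintype ι]

theorem one_lt_sum_of_forall_exists_lt [Nonempty ι] {C : Finset ι} {a : ι → ℝ}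
    (ha : ∀ i ∈ C, 0 ≤ a i) (h : ∀ x : stdSimplex ℝ ι, ∃ i ∈ C, x i < a i) :
    1 < ∑ i ∈ C, a i := by
  classical
  obtain ⟨i₁⟩ := ‹Nonempty ι›
  by_contra! hsum
  let rest : ι → ℝ := Pi.single i₁ (1 - ∑ i ∈ C, a i)
  have hrest : 0 ≤ rest := Pi.single_nonneg.2 (sub_nonneg.2 hsum)
  let x : ι → ℝ := fun i => (if i ∈ C then a i else 0) + rest i
  have hx : x ∈ stdSimplex ℝ ι := by
    refine ⟨fun i => add_nonneg ?_ (hrest i), ?_⟩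
    · split_ifs with hi
      exacts [ha i hi, le_rfl]
    · simp only [x, rest, Finset.sum_add_distrib, Finset.sum_ite_mem, Finset.univ_inter,
        Finset.sum_pi_single', Finset.mem_univ, if_true, add_sub_cancel]
  obtain ⟨i, hi, hlt⟩ := h ⟨x, hx⟩
  have hxi : x i = a i + rest i := by simp only [x, if_pos hi]
  exact (hxi ▸ hlt : a i + rest i < a i).not_ge (le_add_of_nonneg_right (hrest i))

theorem stdSimplex_apply_le_add {η : ℝ} {m : ι → ℝ} (hm : 1 - η ≤ ∑ i, m i) {x : stdSimplex ℝ ι}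
    (hx : ∀ i, m i ≤ x i) (i : ι) : x i ≤ m i + η := by
  have := Finset.single_le_sum (fun j _ => sub_nonneg.2 (hx j)) (Finset.mem_univ i)
  rw [Finset.sum_sub_distrib, stdSimplex.sum_eq_one] at this
  linarith

theorem stdSimplex_dist_le_of_forall_le {η : ℝ} (hη : 0 ≤ η) {m : ι → ℝ} (hm : 1 - η ≤ ∑ i, m i)
    {x y : stdSimplex ℝ ι} (hx : ∀ i, m i ≤ x i) (hy : ∀ i, m i ≤ y i) : dist x y ≤ η := by
  refine (dist_pi_le_iff hη).2 fun i => abs_sub_le_iff.2 ⟨?_, ?_⟩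
  · exact sub_le_iff_le_add'.2 ((stdSimplex_apply_le_add hm hx i).trans (by gcongr; exact hy i))
  · exact sub_le_iff_le_add'.2 ((stdSimplex_apply_le_add hm hy i).trans (by gcongr; exact hx i))

/-- `S` and `C` are those of `exists_colored_dominating`, for a `δ`-net `p`. -/
theorem one_sub_le_sum_inf' [Nonempty ι] [DecidableEq ι] {T : Type*} {p : T → stdSimplex ℝ ι}
    {δ : ℝ} (hp : ∀ x, ∃ t, dist x (p t) < δ) {S : Finset T} (hS : S.Nonempty) {C : Finset ι}
    (hSC : ∀ t, ∃ i ∈ C, ∀ s ∈ S, p t i ≤ p s i) :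
    1 - Fintype.card ι * δ ≤ ∑ i, if i ∈ C then S.inf' hS (p · i) else 0 := by
  have hδ : 0 ≤ δ :=
    let ⟨_, ht⟩ := hp (Classical.arbitrary _)
    dist_nonneg.trans ht.le
  have exists_lt (x : stdSimplex ℝ ι) : ∃ i ∈ C, x i < S.inf' hS (p · i) + δ := by
    obtain ⟨t, hxt⟩ := hp x
    obtain ⟨i, hi, hle⟩ := hSC t
    refine ⟨i, hi, sub_lt_iff_lt_add'.1 ?_⟩
    calc x i - S.inf' hS (p · i) ≤ x i - p t i := by gcongr; exact Finset.le_inf' _ _ hle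
      _ ≤ dist x (p t) := (le_abs_self _).trans (dist_le_pi_dist x.1 (p t).1 i)
      _ < δ := hxt
  have nonneg (i : ι) : 0 ≤ S.inf' hS (p · i) :=
    Finset.le_inf' _ _ fun s _ => stdSimplex.zero_le (p s) i
  have hsum := one_lt_sum_of_forall_exists_lt (fun i _ => add_nonneg (nonneg i) hδ) exists_lt
  have hcard : (C.card : ℝ) * δ ≤ Fintype.card ι * δ := by gcongr; exact C.card_le_univ
  rw [Finset.sum_add_distrib, Finset.sum_const, nsmul_eq_mul] at hsum
  rw [Finset.sum_ite_mem, Finset.univ_inter]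
  linarith

theorem exists_forall_le_or_exists_dist_le [Nonempty ι] (c : stdSimplex ℝ ι → ι) {η : ℝ}
    (hη : 0 < η) : ∃ x : stdSimplex ℝ ι, ∀ i, x i ≤ η ∨ ∃ s, c s = i ∧ dist s x ≤ η := by
  classical
  obtain ⟨δ, hδ, rfl⟩ : ∃ δ : ℝ, 0 < δ ∧ Fintype.card ι * δ = η :=
    ⟨η / Fintype.card ι, by positivity, by field_simp⟩
  obtain ⟨N, -, hN, hcover⟩ :=
    (isCompact_univ : IsCompact (Set.univ : Set (stdSimplex ℝ ι))).finite_cover_balls hδ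
  have net (x : stdSimplex ℝ ι) : ∃ t : N, dist x t < δ := by
    simpa using hcover (Set.mem_univ x)
  have := hN.to_subtype
  have : Nonempty N := (net (Classical.arbitrary _)).nonempty
  obtain ⟨S, C, hcol, hdom⟩ := exists_colored_dominating (fun i (t : N) => t.1 i) (c ·)
  obtain ⟨i₀, hi₀, -⟩ := hdom (Classical.arbitrary N)
  obtain ⟨s₀, hs₀, -⟩ := hcol i₀ hi₀
  have hsum := one_sub_le_sum_inf' net ⟨s₀, hs₀⟩ hdom
  have inf_le {s : N} (hs : s ∈ S) (i : ι) :
      (if i ∈ C then S.inf' ⟨s₀, hs₀⟩ (fun t : N => t.1 i) else 0) ≤ s.1 i := by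
    split_ifs
    exacts [Finset.inf'_le _ hs, stdSimplex.zero_le _ i]
  refine ⟨s₀, fun i => ?_⟩
  by_cases hi : i ∈ C
  · obtain ⟨s, hs, hsi⟩ := hcol i hi
    exact .inr ⟨s, hsi, stdSimplex_dist_le_of_forall_le hη.le hsum (inf_le hs) (inf_le hs₀)⟩
  · have := stdSimplex_apply_le_add hsum (inf_le hs₀) i
    rw [if_neg hi, zero_add] at this
    exact .inl this

/-- The **Knaster–Kuratowski–Mazurkiewicz lemma**, in the form in which each `F i` contains the
facet opposite to the vertex `i`. -/
theorem nonempty_iInter_of_isClosed_of_facet_subset [Nonempty ι] {F : ι → Set (stdSimplex ℝ ι)}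
    (hF : ∀ i, IsClosed (F i)) (hcover : ∀ x, ∃ i, x ∈ F i) (hfacet : ∀ i x, x i = 0 → x ∈ F i) :
    (⋂ i, F i).Nonempty := by
  choose c hc using hcover
  choose x hx using fun n : ℕ =>
    exists_forall_le_or_exists_dist_le c (Nat.one_div_pos_of_nat (α := ℝ) (n := n))
  obtain ⟨a, φ, hφ, hxa⟩ := CompactSpace.tendsto_subseq x
  have hη : Tendsto (fun n => 1 / ((φ n : ℝ) + 1)) atTop (𝓝 0) :=
    tendsto_one_div_add_atTop_nhds_zero_nat.comp hφ.tendsto_atTop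
  refine ⟨a, Set.mem_iInter.2 fun i => ?_⟩
  obtain hai | hai := (stdSimplex.zero_le a i).eq_or_lt
  · exact hfacet i a hai.symm
  have hxi : Tendsto (fun n => x (φ n) i) atTop (𝓝 (a i)) :=
    ((continuous_apply i).comp continuous_subtype_val).continuousAt.tendsto.comp hxa
  rw [← (hF i).closure_eq, Metric.mem_closure_iff]
  intro ε hε
  obtain ⟨n, hlt, hη_lt, hdist⟩ := ((hη.eventually_lt hxi hai).and ((hη.eventually_lt_const
    (half_pos hε)).and (Metric.tendsto_nhds.1 hxa _ (half_pos hε)))).exists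
  obtain hle | ⟨s, hs, hsx⟩ := hx (φ n) i
  · exact absurd hlt hle.not_gt
  · refine ⟨s, hs ▸ hc s, ?_⟩
    calc dist a s ≤ dist (x (φ n)) a + dist s (x (φ n)) := by
          rw [add_comm, dist_comm a]; exact dist_triangle _ _ _
      _ < ε / 2 + ε / 2 := add_lt_add hdist (hsx.trans_lt hη_lt)
      _ = ε := add_halves ε

theorem exists_fixedPoint_stdSimplex [Nonempty ι] {f : stdSimplex ℝ ι → stdSimplex ℝ ι}
    (hf : Continuous f) : ∃ x, f x = x := by
  have hcont (i : ι) : Continuous fun x : stdSimplex ℝ ι => x i :=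
    (continuous_apply i).comp continuous_subtype_val
  have cover (x : stdSimplex ℝ ι) : ∃ i, x i ≤ f x i := by
    by_contra! hlt
    have := Finset.sum_lt_sum_of_nonempty Finset.univ_nonempty fun i _ => hlt i
    rw [stdSimplex.sum_eq_one, stdSimplex.sum_eq_one] at this
    exact this.false
  obtain ⟨x, hx⟩ := nonempty_iInter_of_isClosed_of_facet_subset
    (fun i => isClosed_le (hcont i) ((hcont i).comp hf)) cover
    fun i x hxi => hxi.trans_le (stdSimplex.zero_le (f x) i)
  have hsum := (Finset.sum_eq_sum_iff_of_le fun i _ => Set.mem_iInter.1 hx i).1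
    ((stdSimplex.sum_eq_one x).trans (stdSimplex.sum_eq_one (f x)).symm)
  exact ⟨x, stdSimplex.ext (funext fun i => (hsum i (Finset.mem_univ i)).symm)⟩

end StdSimplex

section Cube

open Function Set unitInterval

theorem exists_section_cube_stdSimplex (ι : Type*) [Fintype ι] :
    ∃ (e : (ι → I) → stdSimplex ℝ (Option ι)) (r : stdSimplex ℝ (Option ι) → ι → I),
      Continuous e ∧ Continuous r ∧ LeftInverse r e := by
  have hn : (0 : ℝ) < Fintype.card ι + 1 := by positivity
  have hsum (t : ι → I) : ∑ k, (t k : ℝ) / (Fintype.card ι + 1) ≤ 1 := by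
    rw [← Finset.sum_div, div_le_one hn]
    calc ∑ k, (t k : ℝ) ≤ ∑ _k : ι, (1 : ℝ) := Finset.sum_le_sum fun k _ => (t k).2.2
      _ ≤ Fintype.card ι + 1 := by simp
  refine ⟨fun t => ⟨fun o => o.elim (1 - ∑ k, (t k : ℝ) / (Fintype.card ι + 1))
      fun k => t k / (Fintype.card ι + 1), ?_, ?_⟩,
    fun x k => projIcc 0 1 zero_le_one ((Fintype.card ι + 1) * x (some k)), ?_, ?_, fun t => ?_⟩
  · rintro (_ | k)
    exacts [sub_nonneg.2 (hsum t), div_nonneg (t k).2.1 hn.le]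
  · simp only [Fintype.sum_option, Option.elim, sub_add_cancel]
  · refine Continuous.subtype_mk (continuous_pi ?_) _
    rintro (_ | k) <;> dsimp only [Option.elim] <;> fun_prop
  · refine continuous_pi fun k => continuous_projIcc.comp ?_
    exact continuous_const.mul ((continuous_apply (some k)).comp continuous_subtype_val)
  · funext k
    change projIcc 0 1 zero_le_one ((Fintype.card ι + 1) * ((t k : ℝ) / (Fintype.card ι + 1))) = t k
    rw [mul_div_cancel₀ _ hn.ne', projIcc_val]

theorem exists_fixedPoint_cube {ι : Type*} [Finite ι] {g : (ι → I) → ι → I} (hg : Continuous g) :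
    ∃ t, g t = t := by
  have := Fintype.ofFinite ι
  obtain ⟨e, r, he, hr, hre⟩ := exists_section_cube_stdSimplex ι
  obtain ⟨x, hx⟩ := exists_fixedPoint_stdSimplex (he.comp (hg.comp hr))
  exact ⟨r x, by simpa only [comp_apply, hre _] using congrArg r hx⟩

end Cube

/-! ### Schauder's projection for ball-convex structures -/

section BallConvex

open Filter Topology unitInterval

variable {Y : Type*}

/-- A path `W x y` from `x` to `y`, depending continuously on its endpoints, that stays in every
closed ball containing both of them. This weakens Takahashi's convex structures, in which
`dist u (W x y t)` is at most `(1 - t) * dist u x + t * dist u y`. -/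
structure IsBallConvexStructure [PseudoMetricSpace Y] (W : Y → Y → I → Y) : Prop where
  continuous : Continuous fun p : Y × Y × I => W p.1 p.2.1 p.2.2
  apply_zero : ∀ x y, W x y 0 = x
  apply_one : ∀ x y, W x y 1 = y
  dist_le_max : ∀ u x y t, dist u (W x y t) ≤ max (dist u x) (dist u y)

/-- The iterated combination `W x₁ (W x₂ (⋯ (W xₙ y₀ wₙ) ⋯) w₂) w₁` over a list of indices, the
substitute for a weighted mean of the points `x k`. Note that `w k = 1` omits `x k`, while `w k = 0`
discards all that follows it. -/
def iteratedComb {ι : Type*} (W : Y → Y → I → Y) (x : ι → Y) (y₀ : Y) (l : List ι) (w : ι → I) :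
    Y :=
  l.foldr (fun k z => W (x k) z (w k)) y₀

namespace IsBallConvexStructure

variable {ι : Type*} [PseudoMetricSpace Y] {W : Y → Y → I → Y}

theorem continuous_iteratedComb (hW : IsBallConvexStructure W) (x : ι → Y) (y₀ : Y) (l : List ι) :
    Continuous (iteratedComb W x y₀ l) := by
  induction l with
  | nil => exact continuous_const
  | cons k l ih =>
    exact hW.continuous.comp (continuous_const.prodMk (ih.prodMk (continuous_apply k)))

theorem dist_iteratedComb_le (hW : IsBallConvexStructure W) {x : ι → Y} (y₀ : Y) {l : List ι}
    {w : ι → I} {y : Y} {δ : ℝ} (hx : ∀ k, w k < 1 → dist y (x k) ≤ δ) (hw : ∃ k ∈ l, w k = 0) :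
    dist y (iteratedComb W x y₀ l w) ≤ δ := by
  induction l with
  | nil => simp only [List.not_mem_nil, false_and, exists_false] at hw
  | cons k l ih =>
    change dist y (W (x k) (iteratedComb W x y₀ l w) (w k)) ≤ δ
    obtain h0 | h0 := eq_or_ne (w k) 0
    · rw [h0, hW.apply_zero]
      exact hx k (h0 ▸ zero_lt_one)
    have hrest : dist y (iteratedComb W x y₀ l w) ≤ δ := by
      obtain ⟨j, hj, hj0⟩ := hw
      exact ih ⟨j, (List.mem_cons.1 hj).resolve_left (fun h => h0 (h ▸ hj0)), hj0⟩
    obtain h1 | h1 := eq_or_ne (w k) 1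
    · rwa [h1, hW.apply_one]
    · exact (hW.dist_le_max ..).trans (max_le (hx k (lt_of_le_of_ne (w k).2.2 h1)) hrest)

theorem exists_approx_factorization_cube [Nonempty Y] (hW : IsBallConvexStructure W) {K : Set Y}
    (hK : IsCompact K) {ε : ℝ} (hε : 0 < ε) :
    ∃ (N : Set Y) (φ : Y → N → I) (ψ : (N → I) → Y), N.Finite ∧ Continuous φ ∧ Continuous ψ ∧
      ∀ y ∈ K, dist y (ψ (φ y)) ≤ ε := by
  obtain ⟨y₀⟩ := ‹Nonempty Y›
  have hε2 : 0 < ε / 2 := half_pos hε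
  obtain ⟨N, -, hN, hcover⟩ := hK.finite_cover_balls hε2
  have := hN.fintype
  -- The coordinate `k` of `y` is `0` if `dist y k ≤ ε / 2`, and `1` if `ε ≤ dist y k`.
  refine ⟨N, fun y k => Set.projIcc 0 1 zero_le_one (dist y k / (ε / 2) - 1),
    iteratedComb W (↑) y₀ Finset.univ.toList, hN, ?_, hW.continuous_iteratedComb .., fun y hy => ?_⟩
  · exact continuous_pi fun k => continuous_projIcc.comp (by fun_prop)
  · refine hW.dist_iteratedComb_le y₀ (fun k hk => ?_) ?_
    · by_contra! hlt
      refine hk.ne (Set.projIcc_of_right_le _ (le_sub_iff_add_le.2 ((le_div_iff₀ hε2).2 ?_)))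
      linarith
    · obtain ⟨k, hk, hyk⟩ := Set.mem_iUnion₂.1 (hcover hy)
      have hle : dist y k / (ε / 2) - 1 ≤ 0 :=
        sub_nonpos.2 ((div_le_one hε2).2 (Metric.mem_ball.1 hyk).le)
      exact ⟨⟨k, hk⟩, Finset.mem_toList.2 (Finset.mem_univ _), Set.projIcc_of_le_left _ hle⟩

theorem exists_dist_map_le [Nonempty Y] (hW : IsBallConvexStructure W) {f : Y → Y}
    (hf : Continuous f) {K : Set Y} (hK : IsCompact K) (hfK : ∀ y, f y ∈ K) {ε : ℝ} (hε : 0 < ε) :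
    ∃ y, dist (f y) y ≤ ε := by
  obtain ⟨N, φ, ψ, hN, hφ, hψ, hdist⟩ := hW.exists_approx_factorization_cube hK hε
  have := hN.to_subtype
  obtain ⟨t, ht⟩ := exists_fixedPoint_cube (hφ.comp (hf.comp hψ))
  have := hdist _ (hfK (ψ t))
  exact ⟨ψ t, by rwa [show φ (f (ψ t)) = t from ht] at this⟩

end IsBallConvexStructure

theorem exists_fixedPoint_of_forall_exists_dist_le [MetricSpace Y] {f : Y → Y}
    (hf : Continuous f) {K : Set Y} (hK : IsCompact K) (hfK : ∀ y, f y ∈ K)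
    (h : ∀ ε > 0, ∃ y, dist (f y) y ≤ ε) : ∃ y, f y = y := by
  choose y hy using fun n : ℕ => h _ (Nat.one_div_pos_of_nat (α := ℝ) (n := n))
  obtain ⟨a, -, φ, hφ, hfya⟩ := hK.tendsto_subseq fun n => hfK (y n)
  have hη : Tendsto (fun n => 1 / ((φ n : ℝ) + 1)) atTop (𝓝 0) :=
    tendsto_one_div_add_atTop_nhds_zero_nat.comp hφ.tendsto_atTop
  have hya : Tendsto (y ∘ φ) atTop (𝓝 a) :=
    hfya.congr_dist (squeeze_zero (fun _ => dist_nonneg) (fun n => hy (φ n)) hη)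
  exact ⟨a, tendsto_nhds_unique ((hf.tendsto a).comp hya) hfya⟩

theorem isBallConvexStructure_restrict {X : Type*} [MetricSpace X] {W : X → X → ℝ → X} {s : Set X}
    (hcont : ContinuousOn (fun p : X × X × ℝ => W p.1 p.2.1 p.2.2) (s ×ˢ s ×ˢ Set.Icc 0 1))
    (hdist : ∀ u ∈ s, ∀ x ∈ s, ∀ y ∈ s, ∀ t ∈ Set.Icc (0 : ℝ) 1,
      dist u (W x y t) ≤ (1 - t) * dist u x + t * dist u y)
    (hmem : ∀ x ∈ s, ∀ y ∈ s, ∀ t ∈ Set.Icc (0 : ℝ) 1, W x y t ∈ s) :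
    IsBallConvexStructure fun (x y : s) (t : I) => (⟨W x y t, hmem x x.2 y y.2 t t.2⟩ : s) where
  continuous := by
    have hW : Continuous fun p : s × s × I => W p.1 p.2.1 p.2.2 :=
      hcont.comp_continuous (f := fun p : s × s × I => ((p.1 : X), (p.2.1 : X), (p.2.2 : ℝ)))
        (by fun_prop) fun p => ⟨p.1.2, p.2.1.2, p.2.2.2⟩
    exact hW.subtype_mk _
  apply_zero x y := by
    have := hdist x x.2 x x.2 y y.2 0 zero_mem
    rw [dist_self, mul_zero, zero_mul, add_zero, dist_le_zero] at this
    exact Subtype.ext this.symm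
  apply_one x y := by
    have := hdist y y.2 x x.2 y y.2 1 one_mem
    rw [dist_self, mul_zero, sub_self, zero_mul, add_zero, dist_le_zero] at this
    exact Subtype.ext this.symm
  dist_le_max u x y t :=
    calc dist (u : X) (W x y t) ≤ (1 - t) * dist (u : X) x + t * dist (u : X) y :=
          hdist u u.2 x x.2 y y.2 t t.2
      _ ≤ max (dist (u : X) x) (dist (u : X) y) :=
          Convex.combo_le_max _ _ (sub_nonneg.2 t.2.2) t.2.1 (sub_add_cancel 1 _)

theorem stmt_19_general [MetricSpace Y] [Nonempty Y] {W : Y → Y → I → Y}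
    (hW : IsBallConvexStructure W) {f : Y → Y} (hf : Continuous f) {K : Set Y} (hK : IsCompact K)
    (hfK : ∀ y, f y ∈ K) : ∃ y, f y = y :=
  exists_fixedPoint_of_forall_exists_dist_le hf hK hfK fun _ => hW.exists_dist_map_le hf hK hfK

end BallConvex

/-- In a strictly convex complete convex metric space, every
continuous self-map of a nonempty compact convex subset `Y` has a fixed point. -/
theorem stmt_19 {X : Type*} [MetricSpace X] [CompleteSpace X] (W : X → X → ℝ → X)
    (hWcont : ContinuousOn (fun p : X × X × ℝ => W p.1 p.2.1 p.2.2)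
      (Set.univ ×ˢ Set.univ ×ˢ Set.Icc (0:ℝ) 1))
    (hW : ∀ (u x y : X), ∀ t ∈ Set.Icc (0:ℝ) 1,
      dist u (W x y t) ≤ (1 - t) * dist u x + t * dist u y)
    (hSC : ∀ (x₀ : X) (ρ : ℝ), 0 < ρ → ∀ x y : X, x ≠ y →
      dist x x₀ = ρ → dist y x₀ = ρ → ∀ t ∈ Set.Ioo (0:ℝ) 1,
        dist (W x y t) x₀ < ρ)
    (Y : Set X) (hYne : Y.Nonempty) (hYcp : IsCompact Y)
    (hYconv : ∀ x ∈ Y, ∀ y ∈ Y, ∀ t ∈ Set.Icc (0:ℝ) 1, W x y t ∈ Y)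
    (f : Y → Y) (hf : Continuous f) :
    ∃ y : Y, f y = y := by
  have := hYne.to_subtype
  have hWY := isBallConvexStructure_restrict
    (hWcont.mono (Set.prod_mono Y.subset_univ (Set.prod_mono_left Y.subset_univ)))
    (fun u _ x _ y _ => hW u x y) hYconv
  exact stmt_19_general hWY hf (isCompact_iff_isCompact_univ.1 hYcp) fun _ => Set.mem_univ _
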